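/- arXiv:1703.06872 — 2 statements merged into one kernel-verified Lean document; each statement's English description precedes it below -/
import Mathlib

section
/- For every odd integer k ≥ 1 and every x ∈ ℝ, lim_{t→b−} E[ (∂_x A(t, x + z√(t−a)))^{k−1} · ∂_{xx} A(t, x + z√(t−a)) · V(t, x, x + z√(t−a)) ] = Δ(x)/k, where Δ(x) = (2/√(2π(b−a))) · e^{−x²/(2(b−a))} / E[ e^{m|x + z√(b−a)|} ]. -/
/-!
Put `r = √(b - t)`, `σ = √(t - a)`, `y = x + zσ`. Since `A_x^{k-1} A_xx` is the `y`-derivative of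
`A_x^k / k`, integrating by parts against the Gaussian density (`gauss_ibp`) and using
`∂_y e^{mA} = m A_x e^{mA}` gives, for fixed `t` (`integral_eq`),

  `E[A_x^{k-1} A_xx V] = E[A_x^k (z - mσ A_x) e^{mA}] / (kσ E[e^{mA}])`.

The second derivative, which concentrates at the kink `y = 0`, has disappeared. As `t → b⁻` one has
`A(t, y) → |y|` (`tendsto_A`) and `A_x(t, y) → sgn y` for `y ≠ 0` (`tendsto_D`), while `|A_x| ≤ 1` and
`A(t, y) ≤ |y| + const` (`A_le`), so dominated convergence applies to numerator and denominator. As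
`k` is odd, `sgn^k = sgn`, and the numerator tends to `E[(z sgn y - mσ) e^{m|y|}]` with `σ = √(b - a)`.
Off the kink its integrand is `-∂_z (sgn(y) e^{m|y|} φ(z))`, so it equals the jump `2 φ(-x/σ)`
(`limit_integral`), and `2 φ(-x/σ) / (kσ E[e^{m|y|}]) = Δ(x) / k`.

The derivatives of `A` come from splitting `E[e^{m'|y + rz|}] = P + Q` at the kink: `P' = m'P + φ/r`
and `Q' = -m'Q - φ/r` with `φ` taken at `-y/r`. Hence `A_x = (P - Q) / (P + Q)`, and `A_xx` has a
closed form that is bounded for fixed `t`, which justifies the integration by parts.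
-/

open MeasureTheory ProbabilityTheory

/-- `A(t,x) = (1/m') log E[exp(m'|x + z√(b-t)|)]` for a standard Gaussian `z`. -/
noncomputable def A (b m' t x : ℝ) : ℝ :=
  (1 / m') * Real.log (∫ z, Real.exp (m' * |x + z * Real.sqrt (b - t)|) ∂(gaussianReal 0 1))

/-- `B(t,x) = (1/m) log E[exp(m A(t, x + z√(t-a)))]` for a standard Gaussian `z`. -/
noncomputable def B (a b m m' t x : ℝ) : ℝ :=
  (1 / m) * Real.log
    (∫ z, Real.exp (m * A b m' t (x + z * Real.sqrt (t - a))) ∂(gaussianReal 0 1))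

/-- `V(t,x,y) = exp(m (A(t,y) - B(t,x)))`. -/
noncomputable def V (a b m m' t x y : ℝ) : ℝ :=
  Real.exp (m * (A b m' t y - B a b m m' t x))

/-- `Δ(x) = (2/√(2π(b-a))) e^{-x²/(2(b-a))} / E[e^{m|x+z√(b-a)|}]`. -/
noncomputable def Del (a b m x : ℝ) : ℝ :=
  2 / Real.sqrt (2 * Real.pi * (b - a)) * Real.exp (-x ^ 2 / (2 * (b - a)))
    / ∫ z, Real.exp (m * |x + z * Real.sqrt (b - a)|) ∂(gaussianReal 0 1)

namespace GaussLimit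

/-! ### Gaussian integrals -/

/-- The standard Gaussian density. -/
noncomputable def phi (z : ℝ) : ℝ := gaussianPDFReal 0 1 z

lemma phi_eq (z : ℝ) : phi z = (Real.sqrt (2 * Real.pi))⁻¹ * Real.exp (-z ^ 2 / 2) := by
  simp [phi, gaussianPDFReal_def]

lemma phi_nonneg (z : ℝ) : 0 ≤ phi z := gaussianPDFReal_nonneg 0 1 z

lemma hasDerivAt_phi (z : ℝ) : HasDerivAt phi (-z * phi z) z := by
  have h : HasDerivAt (fun z : ℝ => (Real.sqrt (2 * Real.pi))⁻¹ * Real.exp (-z ^ 2 / 2))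
      ((Real.sqrt (2 * Real.pi))⁻¹ * (Real.exp (-z ^ 2 / 2) * (-(2 * z) / 2))) z := by
    have h1 : HasDerivAt (fun z : ℝ => -z ^ 2 / 2) (-(2 * z) / 2) z := by
      simpa using ((hasDerivAt_pow 2 z).neg.div_const 2)
    exact h1.exp.const_mul _
  rw [show phi = fun z => _ from funext phi_eq]
  convert h using 1
  ring

lemma continuous_phi : Continuous phi :=
  continuous_iff_continuousAt.2 fun z => (hasDerivAt_phi z).continuousAt

lemma phi_le_phi_zero (z : ℝ) : phi z ≤ phi 0 := by
  rw [phi_eq, phi_eq]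
  refine mul_le_mul_of_nonneg_left (Real.exp_le_exp.2 ?_) (by positivity)
  nlinarith [sq_nonneg z]

lemma integral_gauss (f : ℝ → ℝ) :
    ∫ z, f z ∂(gaussianReal 0 1) = ∫ z, f z * phi z := by
  rw [integral_gaussianReal_eq_integral_smul one_ne_zero]
  simp [phi, mul_comm]

lemma integrable_gauss_iff (f : ℝ → ℝ) :
    Integrable f (gaussianReal 0 1) ↔ Integrable (fun z => f z * phi z) := by
  rw [gaussianReal_of_var_ne_zero _ one_ne_zero,
    integrable_withDensity_iff_integrable_smul' (measurable_gaussianPDF 0 1)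
      (Filter.Eventually.of_forall fun _ => gaussianPDF_lt_top)]
  simp [phi, toReal_gaussianPDF, mul_comm]

lemma integrable_exp_abs (c : ℝ) :
    Integrable (fun z : ℝ => Real.exp (c * |z|)) (gaussianReal 0 1) :=
  integrable_exp_mul_abs (X := fun z : ℝ => z) (integrable_exp_mul_gaussianReal c)
    (integrable_exp_mul_gaussianReal (-c))

lemma integrable_of_exp_bound {f : ℝ → ℝ} (hf : Measurable f) (C c : ℝ)
    (h : ∀ z, |f z| ≤ C * Real.exp (c * |z|)) : Integrable f (gaussianReal 0 1) :=
  ((integrable_exp_abs c).const_mul C).mono' hf.aestronglyMeasurable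
    (Filter.Eventually.of_forall h)

lemma integrable_phi_of_exp_bound {f : ℝ → ℝ} (hf : Measurable f) (C c : ℝ)
    (h : ∀ z, |f z| ≤ C * Real.exp (c * |z|)) : Integrable (fun z => f z * phi z) :=
  (integrable_gauss_iff f).1 (integrable_of_exp_bound hf C c h)

lemma exp_affine_bound (p q z : ℝ) :
    |Real.exp (p + q * z)| ≤ Real.exp p * Real.exp (|q| * |z|) := by
  rw [abs_of_pos (Real.exp_pos _), ← Real.exp_add, ← abs_mul]
  gcongr
  exact le_abs_self _

lemma integrable_affine (p q : ℝ) : Integrable (fun z => Real.exp (p + q * z) * phi z) :=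
  integrable_phi_of_exp_bound (by fun_prop) _ _ (exp_affine_bound p q)

lemma abs_le_exp_abs (z : ℝ) : |z| ≤ Real.exp |z| := by
  linarith [Real.add_one_le_exp |z|]

lemma integrable_affine_deriv (p q : ℝ) :
    Integrable (fun z => ((z - q) * Real.exp (p + q * z)) * phi z) := by
  refine integrable_phi_of_exp_bound (by fun_prop) ((1 + |q|) * Real.exp p) (1 + |q|) fun z => ?_
  rw [abs_mul]
  have h1 := exp_affine_bound p q z
  have h2 : |z - q| ≤ (1 + |q|) * Real.exp |z| := by
    have := abs_sub z q
    have h3 := abs_le_exp_abs z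
    have h4 : 1 ≤ Real.exp |z| := Real.one_le_exp (abs_nonneg z)
    nlinarith [abs_nonneg q]
  calc |z - q| * |Real.exp (p + q * z)|
      ≤ ((1 + |q|) * Real.exp |z|) * (Real.exp p * Real.exp (|q| * |z|)) := by gcongr
    _ = _ := by rw [add_mul 1 |q| |z|, Real.exp_add, one_mul]; ring

lemma hasDerivAt_affine_phi (p q z : ℝ) :
    HasDerivAt (fun z => -(Real.exp (p + q * z) * phi z))
      (((z - q) * Real.exp (p + q * z)) * phi z) z := by
  have h1 : HasDerivAt (fun z : ℝ => p + q * z) q z := by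
    simpa using ((hasDerivAt_id z).const_mul q).const_add p
  exact (h1.exp.mul (hasDerivAt_phi z)).neg.congr_deriv (by ring)

lemma integral_Ioi_affine (p q c : ℝ) :
    ∫ z in Set.Ioi c, ((z - q) * Real.exp (p + q * z)) * phi z
      = Real.exp (p + q * c) * phi c := by
  rw [integral_Ioi_of_hasDerivAt_of_tendsto
    (hasDerivAt_affine_phi p q c).continuousAt.continuousWithinAt
    (fun z _ => hasDerivAt_affine_phi p q z) (integrable_affine_deriv p q).integrableOn
    (tendsto_zero_of_hasDerivAt_of_integrableOn_Ioi (a := c)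
      (fun z _ => hasDerivAt_affine_phi p q z) (integrable_affine_deriv p q).integrableOn
      (integrable_affine p q).neg.integrableOn)]
  ring

lemma integral_Iic_affine (p q c : ℝ) :
    ∫ z in Set.Iic c, ((z - q) * Real.exp (p + q * z)) * phi z
      = -(Real.exp (p + q * c) * phi c) := by
  rw [integral_Iic_of_hasDerivAt_of_tendsto
    (hasDerivAt_affine_phi p q c).continuousAt.continuousWithinAt
    (fun z _ => hasDerivAt_affine_phi p q z) (integrable_affine_deriv p q).integrableOn
    (tendsto_zero_of_hasDerivAt_of_integrableOn_Iic (a := c)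
      (fun z _ => hasDerivAt_affine_phi p q z) (integrable_affine_deriv p q).integrableOn
      (integrable_affine p q).neg.integrableOn)]
  ring

/-! ### The spatial derivatives of `A` -/

/-- `E[e^{m(y + rz)}; y + rz > 0]` (for `r > 0`), written as an integral against the density. -/
noncomputable def P (m r y : ℝ) : ℝ :=
  ∫ z in Set.Ioi (-y / r), Real.exp (m * y + m * r * z) * phi z

/-- `E[e^{-m(y + rz)}; y + rz ≤ 0]` (for `r > 0`), written as an integral against the density. -/
noncomputable def Q (m r y : ℝ) : ℝ :=
  ∫ z in Set.Iic (-y / r), Real.exp (-m * y + -m * r * z) * phi z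

lemma P_nonneg (m r y : ℝ) : 0 ≤ P m r y :=
  integral_nonneg fun z => mul_nonneg (Real.exp_pos _).le (phi_nonneg z)

lemma Q_nonneg (m r y : ℝ) : 0 ≤ Q m r y :=
  integral_nonneg fun z => mul_nonneg (Real.exp_pos _).le (phi_nonneg z)

lemma hasDerivAt_Iic (q c : ℝ) :
    HasDerivAt (fun c => ∫ z in Set.Iic c, Real.exp (0 + q * z) * phi z)
      (Real.exp (0 + q * c) * phi c) c := by
  have hi := integrable_affine 0 q
  have hc : Continuous fun z => Real.exp (0 + q * z) * phi z := by
    have := continuous_phi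
    fun_prop
  have h := (hc.integral_hasStrictDerivAt 0 c).hasDerivAt.const_add
    (∫ z in Set.Iic 0, Real.exp (0 + q * z) * phi z)
  refine h.congr_of_eventuallyEq (Filter.Eventually.of_forall fun u => ?_)
  simp only [← intervalIntegral.integral_Iic_sub_Iic hi.integrableOn hi.integrableOn]
  ring

lemma Q_eq (m r y : ℝ) : Q m r y =
    Real.exp (-m * y) * ∫ z in Set.Iic (-y / r), Real.exp (0 + -m * r * z) * phi z := by
  rw [Q, ← integral_const_mul]
  congr 1; ext z
  rw [Real.exp_add, Real.exp_add, Real.exp_zero]; ring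

lemma P_eq (m r y : ℝ) : P m r y =
    Real.exp (m * y) * ((∫ z, Real.exp (0 + m * r * z) * phi z) -
      ∫ z in Set.Iic (-y / r), Real.exp (0 + m * r * z) * phi z) := by
  have hi := integrable_affine 0 (m * r)
  rw [← intervalIntegral.integral_Iic_add_Ioi (b := -y / r) hi.integrableOn hi.integrableOn,
    add_sub_cancel_left, P, ← integral_const_mul]
  congr 1; ext z
  rw [Real.exp_add, Real.exp_add, Real.exp_zero]; ring

lemma hasDerivAt_lin (c y : ℝ) : HasDerivAt (fun y : ℝ => c * y) c y := by
  simpa using (hasDerivAt_id y).const_mul c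

lemma hasDerivAt_end (r y : ℝ) : HasDerivAt (fun y : ℝ => -y / r) (-1 / r) y := by
  simpa using (hasDerivAt_id y).neg.div_const r

/-- The moving endpoint of integration contributes `-φ(-y/r)/r`, because `e^{-m(y + rz)} = 1` there;
the contribution to `P` is the opposite, so `φ` cancels in `(P + Q)'`. -/
lemma hasDerivAt_Q {r : ℝ} (hr : 0 < r) (m y : ℝ) :
    HasDerivAt (Q m r) (-m * Q m r y - phi (-y / r) / r) y := by
  have h := (hasDerivAt_lin (-m) y).exp.mul
    ((hasDerivAt_Iic (-m * r) (-y / r)).comp y (hasDerivAt_end r y))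
  rw [show Q m r = fun y => _ from funext (Q_eq m r)]
  refine h.congr_deriv ?_
  have e : Real.exp (0 + -m * r * (-y / r)) = (Real.exp (-m * y))⁻¹ := by
    rw [← Real.exp_neg]; congr 1; field_simp; ring
  have := (Real.exp_pos (-m * y)).ne'
  rw [e]
  simp only [Function.comp]
  field_simp
  ring

lemma hasDerivAt_P {r : ℝ} (hr : 0 < r) (m y : ℝ) :
    HasDerivAt (P m r) (m * P m r y + phi (-y / r) / r) y := by
  have h := (hasDerivAt_lin m y).exp.mul
    (((hasDerivAt_Iic (m * r) (-y / r)).comp y (hasDerivAt_end r y)).const_sub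
      (∫ z, Real.exp (0 + m * r * z) * phi z))
  rw [show P m r = fun y => _ from funext (P_eq m r)]
  refine h.congr_deriv ?_
  have e : Real.exp (0 + m * r * (-y / r)) = (Real.exp (m * y))⁻¹ := by
    rw [← Real.exp_neg]; congr 1; field_simp; ring
  have := (Real.exp_pos (m * y)).ne'
  rw [e]
  simp only [Function.comp]
  field_simp

/-- The Gaussian integral against a function constant on each side of the kink `y + rz = 0`. -/
lemma split_integral {r : ℝ} (hr : 0 < r) (m y α β : ℝ) :
    ∫ z, (if 0 < y + z * r then α else β) * Real.exp (m * |y + z * r|) ∂(gaussianReal 0 1)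
      = α * P m r y + β * Q m r y := by
  have hi : Integrable (fun z => ((if 0 < y + z * r then α else β)
      * Real.exp (m * |y + z * r|)) * phi z) := by
    refine integrable_phi_of_exp_bound ?_ ((|α| + |β|) * Real.exp (|m| * |y|)) (|m| * |r|)
      fun z => ?_
    · exact (Measurable.ite (measurableSet_lt (by fun_prop) (by fun_prop)) (by fun_prop)
        (by fun_prop)).mul (by fun_prop)
    · rw [abs_mul, abs_of_pos (Real.exp_pos _), mul_assoc, ← Real.exp_add]
      gcongr
      · split_ifs
        · linarith [abs_nonneg β]
        · linarith [abs_nonneg α]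
      · calc m * |y + z * r| ≤ |m| * |y + z * r| := by gcongr; exact le_abs_self m
          _ ≤ |m| * (|y| + |z * r|) := by gcongr; exact abs_add_le _ _
          _ = _ := by rw [abs_mul]; ring
  rw [integral_gauss, ← intervalIntegral.integral_Iic_add_Ioi (b := -y / r) hi.integrableOn
    hi.integrableOn, P, Q, ← integral_const_mul, ← integral_const_mul, add_comm]
  congr 1
  · refine setIntegral_congr_fun measurableSet_Ioi fun z hz => ?_
    have : 0 < y + z * r := by
      have := (div_lt_iff₀ hr).1 hz
      linarith
    simp only [this, if_true, abs_of_pos this]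
    rw [mul_assoc]; congr 3; ring
  · refine setIntegral_congr_fun measurableSet_Iic fun z hz => ?_
    have : y + z * r ≤ 0 := by
      have := (le_div_iff₀ hr).1 hz
      linarith
    simp only [not_lt.2 this, if_false, abs_of_nonpos this]
    rw [mul_assoc]; congr 3; ring

lemma P_add_Q {r : ℝ} (hr : 0 < r) (m y : ℝ) :
    ∫ z, Real.exp (m * |y + z * r|) ∂(gaussianReal 0 1) = P m r y + Q m r y := by
  simpa using split_integral hr m y 1 1

lemma integrable_exp_abs_affine (m y r : ℝ) :
    Integrable (fun z => Real.exp (m * |y + z * r|)) (gaussianReal 0 1) := by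
  refine integrable_of_exp_bound (by fun_prop) (Real.exp (|m| * |y|)) (|m| * |r|) fun z => ?_
  rw [abs_of_pos (Real.exp_pos _), ← Real.exp_add]
  gcongr
  calc m * |y + z * r| ≤ |m| * |y + z * r| := by gcongr; exact le_abs_self m
    _ ≤ |m| * (|y| + |z * r|) := by gcongr; exact abs_add_le _ _
    _ = _ := by rw [abs_mul]; ring

lemma one_le_F {m : ℝ} (hm : 0 < m) (y r : ℝ) :
    1 ≤ ∫ z, Real.exp (m * |y + z * r|) ∂(gaussianReal 0 1) := by
  calc (1 : ℝ) = ∫ z, (1 : ℝ) ∂(gaussianReal 0 1) := by simp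
    _ ≤ _ := integral_mono (integrable_const _) (integrable_exp_abs_affine m y r)
      fun z => Real.one_le_exp (by positivity)

/-- `∂ₓA = (P - Q) / (P + Q)`, with `m` in the role of `m'` and `r = √(b - t)`. -/
noncomputable def D (m r y : ℝ) : ℝ := (P m r y - Q m r y) / (P m r y + Q m r y)

lemma abs_D_le (m r y : ℝ) : |D m r y| ≤ 1 := by
  have h1 := P_nonneg m r y
  have h2 := Q_nonneg m r y
  rw [D, abs_div, abs_of_nonneg (add_nonneg h1 h2)]
  refine div_le_one_of_le₀ ?_ (add_nonneg h1 h2)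
  rw [abs_le]; constructor <;> linarith

lemma one_le_PQ {m r : ℝ} (hm : 0 < m) (hr : 0 < r) (y : ℝ) : 1 ≤ P m r y + Q m r y := by
  rw [← P_add_Q hr]; exact one_le_F hm y r

lemma hasDerivAt_A {b m t : ℝ} (hm : 0 < m) (ht : t < b) (y : ℝ) :
    HasDerivAt (A b m t) (D m (Real.sqrt (b - t)) y) y := by
  have hr : 0 < Real.sqrt (b - t) := Real.sqrt_pos.2 (by linarith)
  set r := Real.sqrt (b - t)
  have hA : A b m t = fun y => (1 / m) * Real.log (P m r y + Q m r y) := by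
    ext y; rw [A, P_add_Q hr]
  have h1 := one_le_PQ hm hr y
  rw [hA]
  refine ((((hasDerivAt_P hr m y).add (hasDerivAt_Q hr m y)).log (by
    simp only [Pi.add_apply]; linarith)).const_mul (1 / m)).congr_deriv ?_
  simp only [D, Pi.add_apply]
  field_simp
  ring

/-- The second derivative of `A`, in closed form. -/
noncomputable def D2 (m r y : ℝ) : ℝ :=
  4 * m * (P m r y * Q m r y) / (P m r y + Q m r y) ^ 2
    + 2 * (phi (-y / r) / r) / (P m r y + Q m r y)

lemma hasDerivAt_D {m r : ℝ} (hm : 0 < m) (hr : 0 < r) (y : ℝ) :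
    HasDerivAt (D m r) (D2 m r y) y := by
  have h1 := one_le_PQ hm hr y
  have h0 : P m r y + Q m r y ≠ 0 := by linarith
  refine (((hasDerivAt_P hr m y).sub (hasDerivAt_Q hr m y)).div
    ((hasDerivAt_P hr m y).add (hasDerivAt_Q hr m y)) h0).congr_deriv ?_
  simp only [D2, Pi.add_apply, Pi.sub_apply]
  field_simp
  ring

lemma abs_D2_le {m r : ℝ} (hm : 0 < m) (hr : 0 < r) (y : ℝ) :
    |D2 m r y| ≤ m + 2 * (phi 0 / r) := by
  have h1 := one_le_PQ hm hr y
  have hP := P_nonneg m r y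
  have hQ := Q_nonneg m r y
  have hφ := phi_nonneg (-y / r)
  have h0 : 0 < P m r y + Q m r y := by linarith
  rw [abs_of_nonneg (by unfold D2; positivity), D2]
  refine add_le_add ?_ ?_
  · rw [div_le_iff₀ (by positivity)]
    nlinarith [mul_nonneg hm.le (sq_nonneg (P m r y - Q m r y))]
  · refine (div_le_self (by positivity) h1).trans ?_
    gcongr
    exact phi_le_phi_zero _

/-! ### Integration by parts -/

/-- Integration by parts: if `d' = σ d₂` and `w' = mσ d w`, then
`E[d^{k-1} d₂ w] = E[d^k (z - mσ d) w] / (kσ)`; the right side no longer contains `d₂`. -/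
lemma gauss_ibp {d d2 w : ℝ → ℝ} {σ m C c M : ℝ} {k : ℕ} (hk : 1 ≤ k) (hσ : 0 < σ) (hm : 0 < m)
    (hd : ∀ z, HasDerivAt d (σ * d2 z) z) (hw : ∀ z, HasDerivAt w (m * σ * d z * w z) z)
    (hd1 : ∀ z, |d z| ≤ 1) (hd2 : ∀ z, |d2 z| ≤ M) (hd2m : Measurable d2)
    (hwC : ∀ z, |w z| ≤ C * Real.exp (c * |z|)) :
    ∫ z, d z ^ (k - 1) * d2 z * w z ∂(gaussianReal 0 1)
      = 1 / (k * σ) * ∫ z, d z ^ k * (z - m * σ * d z) * w z ∂(gaussianReal 0 1) := by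
  have hdm : Measurable d :=
    (continuous_iff_continuousAt.2 fun z => (hd z).continuousAt).measurable
  have hwm : Measurable w :=
    (continuous_iff_continuousAt.2 fun z => (hw z).continuousAt).measurable
  have hk0 : (0 : ℝ) < k := by exact_mod_cast hk
  have hpow : ∀ (n : ℕ) z, |d z ^ n| ≤ 1 := fun n z => by
    rw [abs_pow]; exact pow_le_one₀ (abs_nonneg _) (hd1 z)
  have i1 : Integrable (fun z => (d z ^ (k - 1) * d2 z * w z) * phi z) := by
    refine integrable_phi_of_exp_bound (by fun_prop) (M * C) c fun z => ?_
    rw [abs_mul, abs_mul, mul_assoc M]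
    refine mul_le_mul ?_ (hwC z) (abs_nonneg _) ((abs_nonneg _).trans (hd2 z))
    calc |d z ^ (k - 1)| * |d2 z| ≤ 1 * |d2 z| := by gcongr; exact hpow _ z
      _ ≤ M := by rw [one_mul]; exact hd2 z
  have i2 : Integrable (fun z => (d z ^ k * w z) * phi z) := by
    refine integrable_phi_of_exp_bound (by fun_prop) C c fun z => ?_
    rw [abs_mul]
    calc |d z ^ k| * |w z| ≤ 1 * |w z| := by gcongr; exact hpow _ z
      _ ≤ _ := by rw [one_mul]; exact hwC z
  have i3 : Integrable (fun z => (d z ^ k * (z - m * σ * d z) * w z) * phi z) := by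
    refine integrable_phi_of_exp_bound (by fun_prop) ((1 + m * σ) * C) (1 + c) fun z => ?_
    rw [abs_mul, abs_mul]
    have h1 : |z - m * σ * d z| ≤ (1 + m * σ) * Real.exp |z| := by
      have h3 := abs_le_exp_abs z
      have h4 : 1 ≤ Real.exp |z| := Real.one_le_exp (abs_nonneg z)
      have h5 : |m * σ * d z| ≤ m * σ := by
        rw [abs_mul, abs_of_pos (mul_pos hm hσ)]
        exact mul_le_of_le_one_right (mul_pos hm hσ).le (hd1 z)
      have := abs_sub z (m * σ * d z)
      nlinarith [mul_pos hm hσ]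
    calc |d z ^ k| * |z - m * σ * d z| * |w z|
        ≤ 1 * ((1 + m * σ) * Real.exp |z|) * (C * Real.exp (c * |z|)) := by
          gcongr
          · exact hpow _ z
          · exact hwC z
      _ = _ := by rw [add_mul 1 c |z|, Real.exp_add, one_mul, one_mul]; ring
  have key := integral_mul_deriv_eq_deriv_mul_of_integrable
    (u := fun z => d z ^ k) (v := fun z => w z * phi z)
    (u' := fun z => k * d z ^ (k - 1) * (σ * d2 z))
    (v' := fun z => m * σ * d z * w z * phi z + w z * (-z * phi z))
    (fun z _ => (hd z).pow k) (fun z _ => (hw z).mul (hasDerivAt_phi z))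
    (i3.neg.congr (Filter.Eventually.of_forall fun z => by
      simp only [Pi.neg_apply, Pi.mul_apply]; ring))
    ((i1.const_mul (k * σ)).congr (Filter.Eventually.of_forall fun z => by
      simp only [Pi.mul_apply]; ring))
    (i2.congr (Filter.Eventually.of_forall fun z => by
      simp only [Pi.mul_apply]; ring))
  rw [integral_gauss, integral_gauss]
  have e1 : ∫ z, d z ^ k * (m * σ * d z * w z * phi z + w z * (-z * phi z))
      = -∫ z, (d z ^ k * (z - m * σ * d z) * w z) * phi z := by
    rw [← integral_neg]; congr 1; ext z; ring
  have e2 : ∫ z, k * d z ^ (k - 1) * (σ * d2 z) * (w z * phi z)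
      = (k * σ) * ∫ z, (d z ^ (k - 1) * d2 z * w z) * phi z := by
    rw [← integral_const_mul]; congr 1; ext z; ring
  rw [e1, e2] at key
  rw [neg_inj.1 key]
  field_simp

/-! ### Limits as `t → b⁻` -/

lemma exp_abs_affine_le {m r y R Y : ℝ} (hm : 0 < m) (hr : |r| ≤ R) (hy : |y| ≤ Y) (z : ℝ) :
    Real.exp (m * |y + z * r|) ≤ Real.exp (m * Y) * Real.exp (m * R * |z|) := by
  rw [← Real.exp_add]
  gcongr
  calc m * |y + z * r| ≤ m * (|y| + |z * r|) := by gcongr; exact abs_add_le _ _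
    _ ≤ m * (Y + |z| * R) := by rw [abs_mul]; gcongr
    _ = _ := by ring

/-- Continuity of `(y, r) ↦ E[g(y + rz) e^{m|y + rz|}]` for bounded measurable `g` continuous at the
limiting arguments; `g = 1` and `g = sgn` give the limits of `A` and `∂ₓA`. -/
lemma tendsto_gauss {ι : Type*} {l : Filter ι} [l.IsCountablyGenerated] {m : ℝ} (hm : 0 < m)
    {y r : ι → ℝ} {y0 r0 : ℝ} (hy : Filter.Tendsto y l (nhds y0))
    (hr : Filter.Tendsto r l (nhds r0)) {g : ℝ → ℝ} (hg : Measurable g) (hg1 : ∀ w, |g w| ≤ 1)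
    (hgc : ∀ z, ContinuousAt g (y0 + z * r0)) :
    Filter.Tendsto (fun i => ∫ z, g (y i + z * r i) * Real.exp (m * |y i + z * r i|)
        ∂(gaussianReal 0 1)) l
      (nhds (∫ z, g (y0 + z * r0) * Real.exp (m * |y0 + z * r0|) ∂(gaussianReal 0 1))) := by
  have hy' : ∀ᶠ i in l, |y i| ≤ |y0| + 1 :=
    (hy.abs.eventually (eventually_lt_nhds (lt_add_one _))).mono fun _ h => h.le
  have hr' : ∀ᶠ i in l, |r i| ≤ |r0| + 1 :=
    (hr.abs.eventually (eventually_lt_nhds (lt_add_one _))).mono fun _ h => h.le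
  refine tendsto_integral_filter_of_dominated_convergence
    (fun z => Real.exp (m * (|y0| + 1)) * Real.exp (m * (|r0| + 1) * |z|)) ?_ ?_
    ((integrable_exp_abs _).const_mul _) ?_
  · exact Filter.Eventually.of_forall fun i =>
      (Measurable.mul (hg.comp (by fun_prop)) (by fun_prop)).aestronglyMeasurable
  · filter_upwards [hy', hr'] with i h1 h2
    refine Filter.Eventually.of_forall fun z => ?_
    rw [Real.norm_eq_abs, abs_mul, abs_of_pos (Real.exp_pos _)]
    calc |g (y i + z * r i)| * Real.exp (m * |y i + z * r i|)
        ≤ 1 * Real.exp (m * |y i + z * r i|) := by gcongr; exact hg1 _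
      _ ≤ _ := by rw [one_mul]; exact exp_abs_affine_le hm h2 h1 z
  · refine Filter.Eventually.of_forall fun z => ?_
    have h := hy.add (hr.const_mul z)
    exact ((hgc z).tendsto.comp h).mul ((h.abs.const_mul m).rexp)

lemma tendsto_sqrt_sub (b : ℝ) :
    Filter.Tendsto (fun t => Real.sqrt (b - t)) (nhdsWithin b (Set.Iio b)) (nhds 0) := by
  have h : Continuous fun t => Real.sqrt (b - t) := by fun_prop
  simpa using (h.tendsto b).mono_left nhdsWithin_le_nhds

lemma tendsto_F {m b : ℝ} (hm : 0 < m) {y : ℝ → ℝ} {y0 : ℝ}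
    (hy : Filter.Tendsto y (nhdsWithin b (Set.Iio b)) (nhds y0)) :
    Filter.Tendsto (fun t => ∫ z, Real.exp (m * |y t + z * Real.sqrt (b - t)|)
        ∂(gaussianReal 0 1)) (nhdsWithin b (Set.Iio b)) (nhds (Real.exp (m * |y0|))) := by
  simpa using tendsto_gauss hm hy (tendsto_sqrt_sub b) (g := fun _ => 1) (by fun_prop)
    (by simp) (fun _ => continuousAt_const)

lemma tendsto_A {m b : ℝ} (hm : 0 < m) {y : ℝ → ℝ} {y0 : ℝ}
    (hy : Filter.Tendsto y (nhdsWithin b (Set.Iio b)) (nhds y0)) :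
    Filter.Tendsto (fun t => A b m t (y t)) (nhdsWithin b (Set.Iio b)) (nhds |y0|) := by
  have h := ((tendsto_F hm hy).log (Real.exp_pos _).ne').const_mul (1 / m)
  rw [Real.log_exp, ← mul_assoc, one_div_mul_cancel hm.ne', one_mul] at h
  exact h

/-- The sign function with the convention `sgn 0 = -1`. -/
noncomputable def sgn (w : ℝ) : ℝ := if 0 < w then 1 else -1

lemma measurable_sgn : Measurable sgn :=
  Measurable.ite measurableSet_Ioi measurable_const measurable_const

lemma abs_sgn (w : ℝ) : |sgn w| = 1 := by
  unfold sgn; split_ifs <;> simp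

lemma continuousAt_sgn {w : ℝ} (hw : w ≠ 0) : ContinuousAt sgn w := by
  rcases lt_or_gt_of_ne hw with h | h
  · refine (continuousAt_const (y := (-1 : ℝ))).congr ?_
    filter_upwards [eventually_lt_nhds h] with v hv
    simp [sgn, hv.le]
  · refine (continuousAt_const (y := (1 : ℝ))).congr ?_
    filter_upwards [eventually_gt_nhds h] with v hv
    simp [sgn, hv]

lemma tendsto_D {m b : ℝ} (hm : 0 < m) {y : ℝ → ℝ} {y0 : ℝ} (h0 : y0 ≠ 0)
    (hy : Filter.Tendsto y (nhdsWithin b (Set.Iio b)) (nhds y0)) :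
    Filter.Tendsto (fun t => D m (Real.sqrt (b - t)) (y t)) (nhdsWithin b (Set.Iio b))
      (nhds (sgn y0)) := by
  have h1 := tendsto_gauss hm hy (tendsto_sqrt_sub b) measurable_sgn (fun w => (abs_sgn w).le)
    (fun z => by simpa using continuousAt_sgn h0)
  have h2 := h1.div (tendsto_F hm hy) (Real.exp_pos _).ne'
  have e : (∫ z, sgn (y0 + z * 0) * Real.exp (m * |y0 + z * 0|) ∂(gaussianReal 0 1))
      / Real.exp (m * |y0|) = sgn y0 := by
    simp
  rw [e] at h2
  refine h2.congr' ?_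
  filter_upwards [self_mem_nhdsWithin] with t ht
  have hr : 0 < Real.sqrt (b - t) := Real.sqrt_pos.2 (by simpa using ht)
  simp only [Pi.div_apply]
  rw [P_add_Q hr, D]
  congr 1
  simp only [sgn]
  rw [split_integral hr]
  ring

lemma A_nonneg {b m t : ℝ} (hm : 0 < m) (y : ℝ) : 0 ≤ A b m t y :=
  mul_nonneg (by positivity) (Real.log_nonneg (one_le_F hm _ _))

/-- A bound `A(t, y) ≤ |y| + const` uniform in `t ∈ [a, b]`; the constant is `A(a, 0)`. -/
lemma A_le {a b m t : ℝ} (hm : 0 < m) (hat : a ≤ t) (y : ℝ) :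
    A b m t y ≤ |y| + A b m a 0 := by
  have hs : Real.sqrt (b - t) ≤ Real.sqrt (b - a) := Real.sqrt_le_sqrt (by linarith)
  have h : ∫ z, Real.exp (m * |y + z * Real.sqrt (b - t)|) ∂(gaussianReal 0 1)
      ≤ Real.exp (m * |y|) *
        ∫ z, Real.exp (m * |0 + z * Real.sqrt (b - a)|) ∂(gaussianReal 0 1) := by
    rw [← integral_const_mul]
    refine integral_mono (integrable_exp_abs_affine _ _ _)
      ((integrable_exp_abs_affine _ _ _).const_mul _) fun z => ?_
    refine (exp_abs_affine_le (R := Real.sqrt (b - a)) hm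
      (by rwa [abs_of_nonneg (Real.sqrt_nonneg _)]) le_rfl z).trans
      (le_of_eq ?_)
    rw [zero_add, abs_mul, abs_of_nonneg (Real.sqrt_nonneg (b - a))]
    congr 2; ring
  have h1 := one_le_F hm y (Real.sqrt (b - t))
  have h2 := one_le_F hm 0 (Real.sqrt (b - a))
  have h3 := Real.log_le_log (by linarith) h
  rw [Real.log_mul (Real.exp_pos _).ne' (by linarith), Real.log_exp] at h3
  calc A b m t y ≤ (1 / m) * (m * |y| + Real.log
        (∫ z, Real.exp (m * |0 + z * Real.sqrt (b - a)|) ∂(gaussianReal 0 1))) :=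
        mul_le_mul_of_nonneg_left h3 (by positivity)
    _ = _ := by rw [A, mul_add, ← mul_assoc, one_div_mul_cancel hm.ne', one_mul]

/-- Domination of the weight `e^{mA}`, uniform in `t ∈ [a, b]`. -/
lemma weight_le {a b m m' t : ℝ} (hm : 0 < m) (hm' : 0 < m') (hat : a ≤ t) (htb : t ≤ b)
    (x z : ℝ) :
    |Real.exp (m * A b m' t (x + z * Real.sqrt (t - a)))| ≤
      Real.exp (m * (|x| + A b m' a 0)) * Real.exp (m * Real.sqrt (b - a) * |z|) := by
  have hs : Real.sqrt (t - a) ≤ Real.sqrt (b - a) := Real.sqrt_le_sqrt (by linarith)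
  rw [abs_of_pos (Real.exp_pos _), ← Real.exp_add]
  gcongr
  calc m * A b m' t (x + z * Real.sqrt (t - a))
      ≤ m * (|x + z * Real.sqrt (t - a)| + A b m' a 0) := by gcongr; exact A_le hm' hat _
    _ ≤ m * ((|x| + |z| * Real.sqrt (b - a)) + A b m' a 0) := by
        gcongr
        refine (abs_add_le _ _).trans ?_
        rw [abs_mul, abs_of_nonneg (Real.sqrt_nonneg _)]
        gcongr
    _ = _ := by ring

/-! ### The limiting integral and the identity at fixed `t` -/

/-- The limiting integral: off the kink the integrand is minus the `z`-derivative of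
`sgn(y) e^{m|y|} φ(z)`, so only the jump at `y = 0` contributes. -/
lemma limit_integral {σ : ℝ} (hσ : 0 < σ) (m x : ℝ) :
    ∫ z, (sgn (x + z * σ) * z - m * σ) * Real.exp (m * |x + z * σ|) ∂(gaussianReal 0 1)
      = 2 * phi (-x / σ) := by
  have hR : Set.EqOn (fun z => ((sgn (x + z * σ) * z - m * σ) * Real.exp (m * |x + z * σ|)) * phi z)
      (fun z => ((z - m * σ) * Real.exp (m * x + m * σ * z)) * phi z) (Set.Ioi (-x / σ)) := by
    intro z hz
    have : 0 < x + z * σ := by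
      have := (div_lt_iff₀ hσ).1 hz
      linarith
    simp only [sgn, this, if_true, abs_of_pos this, one_mul]
    congr 3; ring
  have hL : Set.EqOn (fun z => ((sgn (x + z * σ) * z - m * σ) * Real.exp (m * |x + z * σ|)) * phi z)
      (fun z => -(((z - -(m * σ)) * Real.exp (-(m * x) + -(m * σ) * z)) * phi z))
      (Set.Iic (-x / σ)) := by
    intro z hz
    have : x + z * σ ≤ 0 := by
      have := (le_div_iff₀ hσ).1 hz
      linarith
    simp only [sgn, not_lt.2 this, if_false, abs_of_nonpos this]
    rw [show m * -(x + z * σ) = -(m * x) + -(m * σ) * z by ring]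
    ring
  rw [integral_gauss, ← intervalIntegral.integral_Iic_add_Ioi (b := -x / σ)
    ((integrableOn_congr_fun hL measurableSet_Iic).2 (integrable_affine_deriv _ _).neg.integrableOn)
    ((integrableOn_congr_fun hR measurableSet_Ioi).2 (integrable_affine_deriv _ _).integrableOn),
    setIntegral_congr_fun measurableSet_Iic hL, setIntegral_congr_fun measurableSet_Ioi hR,
    integral_neg, integral_Iic_affine, integral_Ioi_affine,
    show -(m * x) + -(m * σ) * (-x / σ) = 0 by field_simp; ring,
    show m * x + m * σ * (-x / σ) = 0 by field_simp; ring, Real.exp_zero]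
  ring

/-- The functional whose limit is taken, after integrating by parts at a fixed time `t`. -/
lemma integral_eq {a b m m' t : ℝ} (hm : 0 < m) (hm' : 0 < m') (hat : a < t) (htb : t < b)
    {k : ℕ} (hk : 1 ≤ k) (x : ℝ) :
    ∫ z, (deriv (A b m' t) (x + z * Real.sqrt (t - a))) ^ (k - 1)
            * deriv (deriv (A b m' t)) (x + z * Real.sqrt (t - a))
            * V a b m m' t x (x + z * Real.sqrt (t - a)) ∂(gaussianReal 0 1)
      = (1 / (k * Real.sqrt (t - a)) *
        ∫ z, D m' (Real.sqrt (b - t)) (x + z * Real.sqrt (t - a)) ^ k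
          * (z - m * Real.sqrt (t - a) * D m' (Real.sqrt (b - t)) (x + z * Real.sqrt (t - a)))
          * Real.exp (m * A b m' t (x + z * Real.sqrt (t - a))) ∂(gaussianReal 0 1))
        / ∫ z, Real.exp (m * A b m' t (x + z * Real.sqrt (t - a))) ∂(gaussianReal 0 1) := by
  have hr : 0 < Real.sqrt (b - t) := Real.sqrt_pos.2 (by linarith)
  have hσ : 0 < Real.sqrt (t - a) := Real.sqrt_pos.2 (by linarith)
  have hD : deriv (A b m' t) = D m' (Real.sqrt (b - t)) :=
    funext fun y => (hasDerivAt_A hm' htb y).deriv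
  have hD2 : deriv (D m' (Real.sqrt (b - t))) = D2 m' (Real.sqrt (b - t)) :=
    funext fun y => (hasDerivAt_D hm' hr y).deriv
  have hlin : ∀ z, HasDerivAt (fun z => x + z * Real.sqrt (t - a)) (Real.sqrt (t - a)) z :=
    fun z => by simpa using ((hasDerivAt_id z).mul_const (Real.sqrt (t - a))).const_add x
  have hAc : Continuous (A b m' t) :=
    continuous_iff_continuousAt.2 fun y => (hasDerivAt_A hm' htb y).continuousAt
  have hint : Integrable (fun z => Real.exp (m * A b m' t (x + z * Real.sqrt (t - a))))
      (gaussianReal 0 1) :=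
    integrable_of_exp_bound (Continuous.measurable (by fun_prop)) _ _
      (weight_le hm hm' hat.le htb.le x)
  have hpos := integral_exp_pos hint
  have hV : ∀ y, V a b m m' t x y = Real.exp (m * A b m' t y) /
      ∫ z, Real.exp (m * A b m' t (x + z * Real.sqrt (t - a))) ∂(gaussianReal 0 1) := by
    intro y
    rw [V, B, mul_sub, Real.exp_sub, ← mul_assoc, mul_one_div_cancel hm.ne', one_mul,
      Real.exp_log hpos]
  rw [hD, hD2, ← gauss_ibp (d2 := fun z => D2 m' (Real.sqrt (b - t)) (x + z * Real.sqrt (t - a)))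
    hk hσ hm ?_ ?_ (fun z => abs_D_le _ _ _) (fun z => abs_D2_le hm' hr _) ?_
    (weight_le hm hm' hat.le htb.le x)]
  · rw [← integral_div]
    congr 1; ext z
    rw [hV]; ring
  · intro z
    exact ((hasDerivAt_D hm' hr _).comp z (hlin z)).congr_deriv (mul_comm _ _)
  · intro z
    exact (((hasDerivAt_A hm' htb _).comp z (hlin z)).const_mul m).exp.congr_deriv (by
      simp only [Function.comp]; ring)
  · rw [← hD2]
    exact (measurable_deriv _).comp (by fun_prop)

end GaussLimit

/-- `E[(∂ₓA)^{k-1} ∂ₓₓA · V] → Δ(x)/k` as `t → b⁻`, for odd `k`. -/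
theorem odd_power_second_deriv_limit (a b m m' : ℝ) (ha : 0 ≤ a) (hab : a < b)
    (hm : 0 < m) (hmm' : m < m') :
    ∀ k : ℕ, Odd k → ∀ x : ℝ,
      Filter.Tendsto
        (fun t => ∫ z, (deriv (A b m' t) (x + z * Real.sqrt (t - a))) ^ (k - 1)
            * deriv (deriv (A b m' t)) (x + z * Real.sqrt (t - a))
            * V a b m m' t x (x + z * Real.sqrt (t - a)) ∂(gaussianReal 0 1))
        (nhdsWithin b (Set.Iio b)) (nhds (Del a b m x / k)) := by
  open GaussLimit in
  intro k hkodd x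
  have hm' : 0 < m' := hm.trans hmm'
  have hk : 1 ≤ k := hkodd.pos
  have hσ0 : 0 < Real.sqrt (b - a) := Real.sqrt_pos.2 (by linarith)
  have hσ : Filter.Tendsto (fun t => Real.sqrt (t - a)) (nhdsWithin b (Set.Iio b))
      (nhds (Real.sqrt (b - a))) := by
    have h : Continuous fun t => Real.sqrt (t - a) := by fun_prop
    exact (h.tendsto b).mono_left nhdsWithin_le_nhds
  have hy : ∀ z, Filter.Tendsto (fun t => x + z * Real.sqrt (t - a)) (nhdsWithin b (Set.Iio b))
      (nhds (x + z * Real.sqrt (b - a))) := fun z => (hσ.const_mul z).const_add x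
  have hAc : ∀ t < b, Continuous (A b m' t) := fun t ht =>
    continuous_iff_continuousAt.2 fun y => (hasDerivAt_A hm' ht y).continuousAt
  have hDc : ∀ t < b, Continuous (D m' (Real.sqrt (b - t))) := fun t ht =>
    continuous_iff_continuousAt.2 fun y =>
      (hasDerivAt_D hm' (Real.sqrt_pos.2 (by linarith)) y).continuousAt
  have hw : ∀ z, Filter.Tendsto (fun t => Real.exp (m * A b m' t (x + z * Real.sqrt (t - a))))
      (nhdsWithin b (Set.Iio b)) (nhds (Real.exp (m * |x + z * Real.sqrt (b - a)|))) :=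
    fun z => ((tendsto_A hm' (hy z)).const_mul m).rexp
  have hden : Filter.Tendsto
      (fun t => ∫ z, Real.exp (m * A b m' t (x + z * Real.sqrt (t - a))) ∂(gaussianReal 0 1))
      (nhdsWithin b (Set.Iio b))
      (nhds (∫ z, Real.exp (m * |x + z * Real.sqrt (b - a)|) ∂(gaussianReal 0 1))) := by
    refine tendsto_integral_filter_of_dominated_convergence (fun z =>
      Real.exp (m * (|x| + A b m' a 0)) * Real.exp (m * Real.sqrt (b - a) * |z|)) ?_ ?_
      ((integrable_exp_abs _).const_mul _) (Filter.Eventually.of_forall hw)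
    · filter_upwards [self_mem_nhdsWithin] with t ht
      have := hAc t ht
      exact (Continuous.measurable (by fun_prop)).aestronglyMeasurable
    · filter_upwards [Ioo_mem_nhdsLT hab] with t ht
      exact Filter.Eventually.of_forall (weight_le hm hm' ht.1.le ht.2.le x)
  -- The Gaussian measure has no atoms, so the kink `x + zσ = 0` may be discarded.
  have hae : ∀ᵐ z ∂(gaussianReal 0 1), x + z * Real.sqrt (b - a) ≠ 0 := by
    rw [gaussianReal_of_var_ne_zero _ one_ne_zero]
    refine (withDensity_absolutelyContinuous _ _).ae_le ?_
    have h : ∀ᵐ z : ℝ, z ≠ -x / Real.sqrt (b - a) := by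
      simp [ae_iff]
    filter_upwards [h] with z hz h0
    exact hz ((eq_div_iff hσ0.ne').2 (by linarith))
  have hnum : Filter.Tendsto
      (fun t => ∫ z, D m' (Real.sqrt (b - t)) (x + z * Real.sqrt (t - a)) ^ k
          * (z - m * Real.sqrt (t - a) * D m' (Real.sqrt (b - t)) (x + z * Real.sqrt (t - a)))
          * Real.exp (m * A b m' t (x + z * Real.sqrt (t - a))) ∂(gaussianReal 0 1))
      (nhdsWithin b (Set.Iio b))
      (nhds (∫ z, (sgn (x + z * Real.sqrt (b - a)) * z - m * Real.sqrt (b - a))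
        * Real.exp (m * |x + z * Real.sqrt (b - a)|) ∂(gaussianReal 0 1))) := by
    refine tendsto_integral_filter_of_dominated_convergence (fun z =>
      ((1 + m * Real.sqrt (b - a)) * Real.exp (m * (|x| + A b m' a 0))) *
        Real.exp ((1 + m * Real.sqrt (b - a)) * |z|)) ?_ ?_
      ((integrable_exp_abs _).const_mul _) ?_
    · filter_upwards [self_mem_nhdsWithin] with t ht
      have := hAc t ht
      have := hDc t ht
      exact (Continuous.measurable (by fun_prop)).aestronglyMeasurable
    · filter_upwards [Ioo_mem_nhdsLT hab] with t ht
      refine Filter.Eventually.of_forall fun z => ?_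
      have hs : Real.sqrt (t - a) ≤ Real.sqrt (b - a) := Real.sqrt_le_sqrt (by linarith [ht.2])
      have hs0 := Real.sqrt_nonneg (t - a)
      set d := D m' (Real.sqrt (b - t)) (x + z * Real.sqrt (t - a)) with hd
      have hd1 : |d| ≤ 1 := abs_D_le _ _ _
      rw [Real.norm_eq_abs, abs_mul, abs_mul, abs_pow]
      have h1 : |z - m * Real.sqrt (t - a) * d| ≤ (1 + m * Real.sqrt (b - a)) * Real.exp |z| := by
        have h3 := abs_le_exp_abs z
        have h4 : 1 ≤ Real.exp |z| := Real.one_le_exp (abs_nonneg z)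
        have h5 : |m * Real.sqrt (t - a) * d| ≤ m * Real.sqrt (b - a) := by
          rw [abs_mul, abs_of_nonneg (by positivity)]
          calc m * Real.sqrt (t - a) * |d| ≤ m * Real.sqrt (b - a) * 1 := by gcongr
            _ = _ := mul_one _
        have := abs_sub z (m * Real.sqrt (t - a) * d)
        nlinarith [mul_pos hm hσ0]
      calc |d| ^ k * |z - m * Real.sqrt (t - a) * d|
            * |Real.exp (m * A b m' t (x + z * Real.sqrt (t - a)))|
          ≤ 1 * ((1 + m * Real.sqrt (b - a)) * Real.exp |z|) *
            (Real.exp (m * (|x| + A b m' a 0)) * Real.exp (m * Real.sqrt (b - a) * |z|)) := by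
            gcongr
            · exact pow_le_one₀ (abs_nonneg _) hd1
            · exact weight_le hm hm' ht.1.le ht.2.le x z
        _ = _ := by
            rw [add_mul 1 (m * Real.sqrt (b - a)) |z|, Real.exp_add, one_mul, one_mul]; ring
    · filter_upwards [hae] with z hz
      have hD := tendsto_D hm' hz (hy z)
      have h := ((hD.pow k).mul (((hσ.const_mul m).mul hD).const_sub z)).mul (hw z)
      convert h using 2
      -- Oddness of `k` enters here: `sgn ^ k = sgn`.
      simp only [sgn]
      split_ifs
      · simp
      · rw [hkodd.neg_one_pow]; ring
  rw [limit_integral hσ0] at hnum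
  have hden0 := integral_exp_pos (integrable_exp_abs_affine m x (Real.sqrt (b - a)))
  have hk0 : (k : ℝ) ≠ 0 := by positivity
  have hmain := (((tendsto_const_nhds (x := (1 : ℝ))).div (hσ.const_mul (k : ℝ)) (by positivity)).mul hnum).div hden hden0.ne'
  have hval : 1 / (k * Real.sqrt (b - a)) * (2 * phi (-x / Real.sqrt (b - a))) /
      (∫ z, Real.exp (m * |x + z * Real.sqrt (b - a)|) ∂(gaussianReal 0 1))
      = Del a b m x / k := by
    have hsq : Real.sqrt (b - a) ^ 2 = b - a := Real.sq_sqrt (by linarith)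
    rw [Del, phi_eq, Real.sqrt_mul (x := 2 * Real.pi) (by positivity) (b - a), div_pow, neg_sq, hsq,
      show -(x ^ 2 / (b - a)) / 2 = -x ^ 2 / (2 * (b - a)) by field_simp]
    have : Real.sqrt (2 * Real.pi) ≠ 0 := by positivity
    field_simp
  rw [hval] at hmain
  refine hmain.congr' ?_
  filter_upwards [Ioo_mem_nhdsLT hab] with t ht
  exact (integral_eq hm hm' ht.1 ht.2 hk x).symm
end

section
/- For every odd integer k ≥ 1 and every x ∈ ℝ, lim_{t→b−} D(t,x) = √(b−a) · ( Δ(x) + m ), where D(t,x) = E[ z · (∂_x A(t, x + z√(t−a)))^{k} · V(t, x, x + z√(t−a)) ] and Δ(x) = (2/√(2π(b−a))) · e^{−x²/(2(b−a))} / E[ e^{m|x + z√(b−a)|} ]. -/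
/-!
As `t → b⁻` the variance `b - t` in `A` vanishes, so `A(t,y) → |y|` and, away from the kink
`y = 0`, `∂ₓA(t,y) → sign y`. The second limit uses that `∂ₓA(t,y)` is the mean of
`sign(y + z√(b-t))` under an exponentially tilted Gaussian (`deriv_A`), where the argument
of the sign concentrates at `y` (`tendsto_integral_shift`). Since `A(t,·)` is `1`-Lipschitz and `A(t,0) → 0`, the
integrands of `D(t,x)` and of `exp(m B(t,x))` are dominated by a multiple of `exp(C|z|)`
(`tendsto_integral_tilt`). With `s = √(b-a)` and `sign^k = sign` for odd `k`,
`D(t,x) → E[z sign(x + z s) e^{m|x + z s|}] / E[e^{m|x + z s|}]`.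

Gaussian integration by parts (`integral_mul_sign_exp`) evaluates the numerator: the smooth part
of `sign(x + z s) e^{m|x + z s|}` contributes `m s E[e^{m|x + z s|}]`, and its jump of height `2`
at `z = -x/s` contributes twice the Gaussian density there, which is `s Δ(x) E[e^{m|x + z s|}]`.
-/

open MeasureTheory ProbabilityTheory

open Filter Topology Real

/-! ### Exponential moments of shifted Gaussians -/

/-- Every constant multiple of `|z|` has a finite exponential moment under the Gaussian. -/
lemma integrable_exp_abs (c : ℝ) :
    Integrable (fun z => rexp (c * |z|)) (gaussianReal 0 1) :=
  integrable_exp_mul_abs (X := fun z => z) (integrable_exp_mul_gaussianReal c)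
    (integrable_exp_mul_gaussianReal (-c))

lemma exp_shift_le {c : ℝ} (hc : 0 ≤ c) {y σ R S : ℝ} (hy : |y| ≤ R) (hσ : |σ| ≤ S) (z : ℝ) :
    rexp (c * |y + z * σ|) ≤ rexp (c * R) * rexp (c * S * |z|) := by
  rw [← Real.exp_add, Real.exp_le_exp]
  have h1 : |y + z * σ| ≤ R + |z| * S := by
    refine (abs_add_le _ _).trans (add_le_add hy ?_)
    rw [abs_mul]
    exact mul_le_mul_of_nonneg_left hσ (abs_nonneg _)
  nlinarith [mul_le_mul_of_nonneg_left h1 hc]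

lemma integrable_exp_shift {c : ℝ} (hc : 0 ≤ c) (y σ : ℝ) :
    Integrable (fun z => rexp (c * |y + z * σ|)) (gaussianReal 0 1) := by
  refine ((integrable_exp_abs (c * |σ|)).const_mul (rexp (c * |y|))).mono'
    (Continuous.aestronglyMeasurable (by fun_prop)) (ae_of_all _ fun z => ?_)
  rw [Real.norm_eq_abs, Real.abs_exp]
  exact exp_shift_le hc le_rfl le_rfl z

lemma integral_exp_shift_pos {c : ℝ} (hc : 0 ≤ c) (y σ : ℝ) :
    0 < ∫ z, rexp (c * |y + z * σ|) ∂(gaussianReal 0 1) :=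
  integral_exp_pos (integrable_exp_shift hc y σ)

lemma measurable_sign_cast : Measurable (fun u : ℝ => ((SignType.sign u : SignType) : ℝ)) := by
  refine Monotone.measurable fun u v huv => ?_
  have := SignType.sign.monotone huv
  revert this
  generalize SignType.sign u = p
  generalize SignType.sign v = q
  cases p <;> cases q <;> simp

lemma abs_sign_cast_le (u : ℝ) : |((SignType.sign u : SignType) : ℝ)| ≤ 1 := by
  rcases SignType.sign u with _ | _ | _ <;> simp

lemma continuousAt_sign_cast {u : ℝ} (hu : u ≠ 0) :
    ContinuousAt (fun u : ℝ => ((SignType.sign u : SignType) : ℝ)) u :=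
  ContinuousAt.comp (f := fun u : ℝ => SignType.sign u) (g := fun p : SignType => (p : ℝ))
    continuous_of_discreteTopology.continuousAt (continuousAt_sign_of_ne_zero hu)

/-! ### Concentration as the variance vanishes -/

/-- The shrinking Gaussian perturbation `y + z σ`, `σ → 0`, concentrates at `lim y`. -/
lemma tendsto_integral_shift {ι : Type*} {l : Filter ι} [l.IsCountablyGenerated] {c : ℝ}
    (hc : 0 ≤ c) {y σ : ι → ℝ} {Y : ℝ} (hy : Tendsto y l (𝓝 Y)) (hσ : Tendsto σ l (𝓝 0))
    {g : ℝ → ℝ} (hg : Measurable g) (hg1 : ∀ u, |g u| ≤ 1) (hgY : ContinuousAt g Y) :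
    Tendsto (fun i => ∫ z, g (y i + z * σ i) * rexp (c * |y i + z * σ i|) ∂(gaussianReal 0 1)) l
      (𝓝 (g Y * rexp (c * |Y|))) := by
  have hlim : g Y * rexp (c * |Y|) = ∫ _z, g Y * rexp (c * |Y|) ∂(gaussianReal 0 1) := by simp
  rw [hlim]
  refine tendsto_integral_filter_of_dominated_convergence
    (fun z => rexp (c * (|Y| + 1)) * rexp (c * 1 * |z|)) ?_ ?_
    ((integrable_exp_abs _).const_mul _) ?_
  · refine Eventually.of_forall fun i => Measurable.aestronglyMeasurable ?_
    exact (hg.comp (by fun_prop)).mul (by fun_prop)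
  · have h1 : ∀ᶠ i in l, |y i| < |Y| + 1 :=
      hy.abs.eventually_lt_const (by linarith)
    have h2 : ∀ᶠ i in l, |σ i| < 1 :=
      hσ.abs.eventually_lt_const (by simp)
    filter_upwards [h1, h2] with i h1 h2
    refine ae_of_all _ fun z => ?_
    rw [norm_mul, Real.norm_eq_abs, Real.norm_eq_abs, Real.abs_exp]
    calc _ ≤ 1 * rexp (c * |y i + z * σ i|) :=
          mul_le_mul_of_nonneg_right (hg1 _) (Real.exp_pos _).le
      _ ≤ _ := by rw [one_mul]; exact exp_shift_le hc h1.le h2.le z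
  · refine ae_of_all _ fun z => ?_
    have h : Tendsto (fun i => y i + z * σ i) l (𝓝 Y) := by
      simpa using hy.add (hσ.const_mul z)
    exact (hgY.tendsto.comp h).mul
      ((Real.continuous_exp.tendsto _).comp ((h.abs).const_mul c))

/-! ### Regularity of `A` in space -/

lemma A_le_add {b m' : ℝ} (hm' : 0 < m') (t y y' : ℝ) :
    A b m' t y ≤ A b m' t y' + |y - y'| := by
  unfold A
  set σ := √(b - t)
  have hI := integral_exp_shift_pos hm'.le y σ
  have hI' := integral_exp_shift_pos hm'.le y' σ
  have h : ∫ z, rexp (m' * |y + z * σ|) ∂(gaussianReal 0 1)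
      ≤ rexp (m' * |y - y'|) * ∫ z, rexp (m' * |y' + z * σ|) ∂(gaussianReal 0 1) := by
    rw [← integral_const_mul]
    refine integral_mono (integrable_exp_shift hm'.le _ _)
      ((integrable_exp_shift hm'.le _ _).const_mul _) fun z => ?_
    simp only
    rw [← Real.exp_add, Real.exp_le_exp, ← mul_add]
    refine mul_le_mul_of_nonneg_left ?_ hm'.le
    calc |y + z * σ| = |(y - y') + (y' + z * σ)| := by ring_nf
      _ ≤ _ := abs_add_le _ _
  have h2 := Real.log_le_log hI h
  rw [Real.log_mul (Real.exp_pos _).ne' hI'.ne', Real.log_exp] at h2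
  calc _ ≤ 1 / m' * (m' * |y - y'| + Real.log (∫ z, rexp (m' * |y' + z * σ|) ∂(gaussianReal 0 1))) :=
        mul_le_mul_of_nonneg_left h2 (by positivity)
    _ = _ := by rw [mul_add, ← mul_assoc, one_div_mul_cancel hm'.ne', one_mul, add_comm]

lemma A_lipschitz {b m' : ℝ} (hm' : 0 < m') (t : ℝ) : LipschitzWith 1 (A b m' t) := by
  refine LipschitzWith.of_le_add fun y y' => ?_
  rw [Real.dist_eq]
  exact A_le_add hm' t y y'

lemma abs_deriv_A_le {b m' : ℝ} (hm' : 0 < m') (t y : ℝ) : |deriv (A b m' t) y| ≤ 1 := by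
  simpa using norm_deriv_le_of_lipschitz (x₀ := y) (A_lipschitz (b := b) hm' t)

lemma exp_mul_abs_sub_le {c : ℝ} (hc : 0 ≤ c) {u v R : ℝ} (hu : |u| ≤ R) :
    rexp (c * |u|) - rexp (c * |v|) ≤ c * rexp (c * R) * |u - v| := by
  have h1 : rexp (c * |u|) * (1 + (c * |v| - c * |u|)) ≤ rexp (c * |v|) := by
    have := mul_le_mul_of_nonneg_left (Real.add_one_le_exp (c * |v| - c * |u|))
      (Real.exp_pos (c * |u|)).le
    rw [← Real.exp_add] at this
    simpa [add_comm] using this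
  have h2 : rexp (c * |u|) ≤ rexp (c * R) :=
    Real.exp_le_exp.2 (mul_le_mul_of_nonneg_left hu hc)
  have h3 : |u| - |v| ≤ |u - v| := abs_sub_abs_le_abs_sub u v
  calc rexp (c * |u|) - rexp (c * |v|) ≤ rexp (c * |u|) * (c * (|u| - |v|)) := by nlinarith
    _ ≤ rexp (c * |u|) * (c * |u - v|) := by gcongr
    _ ≤ rexp (c * R) * (c * |u - v|) := by gcongr
    _ = _ := by ring

/-- Differentiation under the expectation: the kink of `|·|` is only met for a single value of
`z`, which the Gaussian does not charge. -/
lemma hasDerivAt_integral_exp_shift {c : ℝ} (hc : 0 ≤ c) {σ : ℝ} (hσ : 0 < σ) (y : ℝ) :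
    HasDerivAt (fun y => ∫ z, rexp (c * |y + z * σ|) ∂(gaussianReal 0 1))
      (∫ z, c * ((SignType.sign (y + z * σ) : ℝ) * rexp (c * |y + z * σ|)) ∂(gaussianReal 0 1))
      y := by
  refine (hasDerivAt_integral_of_dominated_loc_of_lip
    (F := fun y z => rexp (c * |y + z * σ|))
    (bound := fun z => c * rexp (c * (|y| + 1 + |z| * σ)))
    (Metric.ball_mem_nhds y one_pos) ?_ (integrable_exp_shift hc y σ) ?_ ?_ ?_ ?_).2
  · exact Eventually.of_forall fun y' => Continuous.aestronglyMeasurable (by fun_prop)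
  · refine Measurable.aestronglyMeasurable (Measurable.const_mul ?_ _)
    exact (measurable_sign_cast.comp (by fun_prop : Measurable fun z : ℝ => y + z * σ)).mul
      (by fun_prop)
  · refine ae_of_all _ fun z => ?_
    have hR : ∀ u ∈ Metric.ball y 1, |u + z * σ| ≤ |y| + 1 + |z| * σ := by
      intro u hu
      rw [Metric.mem_ball, Real.dist_eq] at hu
      have h1 := abs_add_le u (z * σ)
      have h2 := abs_sub_abs_le_abs_sub u y
      rw [abs_mul, abs_of_pos hσ] at h1
      linarith
    refine LipschitzOnWith.of_dist_le_mul fun u hu v hv => ?_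
    have hB : (0 : ℝ) ≤ c * rexp (c * (|y| + 1 + |z| * σ)) := by positivity
    rw [Real.coe_nnabs, abs_of_nonneg hB, Real.dist_eq, Real.dist_eq, abs_sub_le_iff]
    have h1 := exp_mul_abs_sub_le hc (v := v + z * σ) (hR u hu)
    have h2 := exp_mul_abs_sub_le hc (v := u + z * σ) (hR v hv)
    rw [add_sub_add_right_eq_sub] at h1 h2
    rw [abs_sub_comm v u] at h2
    exact ⟨h1, h2⟩
  · have := ((integrable_exp_abs (c * σ)).const_mul (rexp (c * (|y| + 1)))).const_mul c
    refine this.congr (ae_of_all _ fun z => ?_)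
    simp only
    rw [← Real.exp_add]
    ring_nf
  · have h0 : ∀ᵐ z ∂(gaussianReal 0 1), z ≠ -y / σ := by
      have := nullSingletonClass_gaussianReal (μ := 0) (v := 1) one_ne_zero
      exact Measure.ae_ne _ _
    filter_upwards [h0] with z hz
    have hne : y + z * σ ≠ 0 := by
      intro h
      apply hz
      field_simp
      linarith
    have h1 : HasDerivAt (fun y => y + z * σ) 1 y := (hasDerivAt_id y).add_const _
    have h2 := ((HasDerivAt.comp y (hasDerivAt_abs hne) h1).const_mul c).exp
    refine h2.congr_deriv ?_
    simp only [Function.comp_apply]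
    ring

/-- The derivative of `A(t,·)` is the average of `sign(y + z√(b-t))` under the exponentially
tilted Gaussian. -/
lemma deriv_A {b m' : ℝ} (hm' : 0 < m') {t : ℝ} (ht : t < b) (y : ℝ) :
    deriv (A b m' t) y =
      (∫ z, (SignType.sign (y + z * √(b - t)) : ℝ) * rexp (m' * |y + z * √(b - t)|)
        ∂(gaussianReal 0 1)) / ∫ z, rexp (m' * |y + z * √(b - t)|) ∂(gaussianReal 0 1) := by
  have hσ : 0 < √(b - t) := Real.sqrt_pos.2 (by linarith)
  have h := ((hasDerivAt_integral_exp_shift hm'.le hσ y).log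
    (integral_exp_shift_pos hm'.le y _).ne').const_mul (1 / m')
  have h2 : HasDerivAt (A b m' t) _ y := h
  rw [h2.deriv, integral_const_mul, ← mul_div_assoc, ← mul_assoc, one_div_mul_cancel hm'.ne',
    one_mul]

/-! ### Limits of `A` and `∂ₓA` -/

lemma tendsto_sigma (b : ℝ) : Tendsto (fun t => √(b - t)) (𝓝[<] b) (𝓝 0) := by
  have : ContinuousAt (fun t => √(b - t)) b := by fun_prop
  simpa using this.tendsto.mono_left nhdsWithin_le_nhds

lemma tendsto_integral_exp_shift {b m' : ℝ} (hm' : 0 < m') {y : ℝ → ℝ} {Y : ℝ}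
    (hy : Tendsto y (𝓝[<] b) (𝓝 Y)) :
    Tendsto (fun t => ∫ z, rexp (m' * |y t + z * √(b - t)|) ∂(gaussianReal 0 1)) (𝓝[<] b)
      (𝓝 (rexp (m' * |Y|))) := by
  simpa using tendsto_integral_shift hm'.le hy (tendsto_sigma b) (g := fun _ => 1)
    measurable_const (by simp) continuousAt_const

lemma tendsto_A {b m' : ℝ} (hm' : 0 < m') {y : ℝ → ℝ} {Y : ℝ}
    (hy : Tendsto y (𝓝[<] b) (𝓝 Y)) :
    Tendsto (fun t => A b m' t (y t)) (𝓝[<] b) (𝓝 |Y|) := by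
  have h := ((tendsto_integral_exp_shift hm' hy).log (Real.exp_pos _).ne').const_mul (1 / m')
  rwa [Real.log_exp, ← mul_assoc, one_div_mul_cancel hm'.ne', one_mul] at h

lemma tendsto_deriv_A {b m' : ℝ} (hm' : 0 < m') {y : ℝ → ℝ} {Y : ℝ} (hY : Y ≠ 0)
    (hy : Tendsto y (𝓝[<] b) (𝓝 Y)) :
    Tendsto (fun t => deriv (A b m' t) (y t)) (𝓝[<] b) (𝓝 (SignType.sign Y : ℝ)) := by
  have h := (tendsto_integral_shift hm'.le hy (tendsto_sigma b) measurable_sign_cast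
    abs_sign_cast_le (continuousAt_sign_cast hY)).div (tendsto_integral_exp_shift hm' hy)
    (Real.exp_pos _).ne'
  rw [mul_div_assoc, div_self (Real.exp_pos _).ne', mul_one] at h
  refine h.congr' ?_
  filter_upwards [self_mem_nhdsWithin] with t ht
  exact (deriv_A hm' ht (y t)).symm

/-! ### Passing to the limit in the expectations -/

/-- Dominated convergence for the numerator (`q z = z`, `j = k`) and the normalisation
(`q = 1`, `j = 0`) of `D(t,x)`. The bounds come from `|∂ₓA| ≤ 1` and
`A(t,y) ≤ A(t,0) + |y| ≤ 1 + |y|` for `t` near `b`. -/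
lemma tendsto_integral_tilt {a b m m' : ℝ} (hab : a < b) (hm : 0 < m) (hm' : 0 < m') (x : ℝ)
    {q : ℝ → ℝ} (hq : Measurable q) (hq1 : ∀ z, |q z| ≤ rexp |z|) (j : ℕ) :
    Tendsto (fun t => ∫ z, q z * (deriv (A b m' t) (x + z * √(t - a))) ^ j
        * rexp (m * A b m' t (x + z * √(t - a))) ∂(gaussianReal 0 1)) (𝓝[<] b)
      (𝓝 (∫ z, q z * (SignType.sign (x + z * √(b - a)) : ℝ) ^ j
        * rexp (m * |x + z * √(b - a)|) ∂(gaussianReal 0 1))) := by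
  have hs : 0 < √(b - a) := Real.sqrt_pos.2 (by linarith)
  refine tendsto_integral_filter_of_dominated_convergence
    (fun z => rexp (m * (1 + |x|)) * rexp ((1 + m * √(b - a)) * |z|)) ?_ ?_
    ((integrable_exp_abs _).const_mul _) ?_
  · refine Eventually.of_forall fun t => Measurable.aestronglyMeasurable ?_
    have h1 : Measurable fun z : ℝ => x + z * √(t - a) := by fun_prop
    have h2 : Measurable (A b m' t) := (A_lipschitz hm' t).continuous.measurable
    exact (hq.mul (((measurable_deriv (A b m' t)).comp h1).pow_const j)).mul
      ((h2.comp h1).const_mul m).exp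
  · have h0 : ∀ᶠ t in 𝓝[<] b, A b m' t 0 < 1 :=
      (tendsto_A hm' (y := fun _ => 0) tendsto_const_nhds).eventually_lt_const (by simp)
    filter_upwards [h0, self_mem_nhdsWithin] with t h0 ht
    refine ae_of_all _ fun z => ?_
    have ht' : √(t - a) ≤ √(b - a) := Real.sqrt_le_sqrt (by linarith [Set.mem_Iio.1 ht])
    have h1 : A b m' t (x + z * √(t - a)) ≤ 1 + |x| + |z| * √(b - a) := by
      have h2 := A_le_add (b := b) hm' t (x + z * √(t - a)) 0
      have h3 := abs_add_le x (z * √(t - a))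
      rw [abs_mul, abs_of_nonneg (Real.sqrt_nonneg _)] at h3
      have h4 := mul_le_mul_of_nonneg_left ht' (abs_nonneg z)
      rw [sub_zero] at h2
      linarith
    have h5 : |deriv (A b m' t) (x + z * √(t - a))| ^ j ≤ 1 :=
      pow_le_one₀ (abs_nonneg _) (abs_deriv_A_le hm' _ _)
    rw [norm_mul, norm_mul, norm_pow, Real.norm_eq_abs, Real.norm_eq_abs, Real.norm_eq_abs,
      Real.abs_exp]
    calc _ ≤ rexp |z| * 1 * rexp (m * (1 + |x| + |z| * √(b - a))) := by
          gcongr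
          exact hq1 z
      _ = _ := by
          rw [mul_one, ← Real.exp_add, ← Real.exp_add]
          ring_nf
  · have h0 : ∀ᵐ z ∂(gaussianReal 0 1), z ≠ -x / √(b - a) := by
      have := nullSingletonClass_gaussianReal (μ := 0) (v := 1) one_ne_zero
      exact Measure.ae_ne _ _
    filter_upwards [h0] with z hz
    have hne : x + z * √(b - a) ≠ 0 := by
      intro h
      apply hz
      field_simp
      linarith
    have hy : Tendsto (fun t => x + z * √(t - a)) (𝓝[<] b) (𝓝 (x + z * √(b - a))) := by
      have : ContinuousAt (fun t => x + z * √(t - a)) b := by fun_prop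
      exact this.tendsto.mono_left nhdsWithin_le_nhds
    exact (((tendsto_deriv_A hm' hne hy).pow j).const_mul (q z)).mul
      ((Real.continuous_exp.tendsto _).comp ((tendsto_A hm' hy).const_mul m))

/-! ### Gaussian integration by parts -/

lemma integrable_pdf_mul {f : ℝ → ℝ} (hf : Integrable f (gaussianReal 0 1)) :
    Integrable (fun z => gaussianPDFReal 0 1 z * f z) := by
  rw [gaussianReal_of_var_ne_zero _ one_ne_zero,
    integrable_withDensity_iff_integrable_smul' (measurable_gaussianPDF _ _)
      (ae_of_all _ fun _ => gaussianPDF_lt_top)] at hf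
  simpa using hf

lemma hasDerivAt_exp_mul_pdf (α z : ℝ) :
    HasDerivAt (fun z => gaussianPDFReal 0 1 z * rexp (α * z))
      (gaussianPDFReal 0 1 z * ((α - z) * rexp (α * z))) z := by
  have h1 : HasDerivAt (fun z : ℝ => -(z - 0) ^ 2 / (2 * ((1 : NNReal) : ℝ))) (-z) z := by
    have := (((hasDerivAt_id z).sub_const 0).pow 2).neg.div_const (2 * ((1 : NNReal) : ℝ))
    refine this.congr_deriv ?_
    simp
    ring
  have h2 := (h1.exp.const_mul (√(2 * π * ((1 : NNReal) : ℝ)))⁻¹).mul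
    (((hasDerivAt_id z).const_mul α).exp)
  simp only [gaussianPDFReal_def]
  refine h2.congr_deriv ?_
  simp only [id]
  ring

lemma integrable_mul_exp (α : ℝ) :
    Integrable (fun z => (α - z) * rexp (α * z)) (gaussianReal 0 1) := by
  refine ((integrable_exp_abs (|α| + 1)).const_mul (|α| + 1)).mono'
    (Continuous.aestronglyMeasurable (by fun_prop)) (ae_of_all _ fun z => ?_)
  have h1 : |α - z| ≤ (|α| + 1) * rexp |z| := by
    have := Real.add_one_le_exp |z|
    have := abs_sub α z
    nlinarith [abs_nonneg α, abs_nonneg z]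
  have h2 : rexp (α * z) ≤ rexp (|α| * |z|) := by
    rw [← abs_mul]
    exact Real.exp_le_exp.2 (le_abs_self _)
  rw [norm_mul, Real.norm_eq_abs, Real.norm_eq_abs, Real.abs_exp]
  calc _ ≤ ((|α| + 1) * rexp |z|) * rexp (|α| * |z|) := by gcongr
    _ = _ := by rw [mul_assoc, ← Real.exp_add]; ring_nf

lemma integral_Ioi_mul_exp (α c : ℝ) :
    ∫ z in Set.Ioi c, gaussianPDFReal 0 1 z * ((α - z) * rexp (α * z))
      = -(gaussianPDFReal 0 1 c * rexp (α * c)) := by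
  have hi := (integrable_pdf_mul (integrable_mul_exp α)).integrableOn (s := Set.Ioi c)
  have hf := (integrable_pdf_mul (integrable_exp_mul_gaussianReal α)).integrableOn
    (s := Set.Ioi c)
  rw [integral_Ioi_of_hasDerivAt_of_tendsto (hasDerivAt_exp_mul_pdf α c).continuousAt.continuousWithinAt
    (fun z _ => hasDerivAt_exp_mul_pdf α z) hi
    (tendsto_zero_of_hasDerivAt_of_integrableOn_Ioi (fun z _ => hasDerivAt_exp_mul_pdf α z) hi hf),
    zero_sub]

lemma integral_Iio_mul_exp (α c : ℝ) :
    ∫ z in Set.Iio c, gaussianPDFReal 0 1 z * ((α - z) * rexp (α * z))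
      = gaussianPDFReal 0 1 c * rexp (α * c) := by
  have hi := (integrable_pdf_mul (integrable_mul_exp α)).integrableOn (s := Set.Iic c)
  have hf := (integrable_pdf_mul (integrable_exp_mul_gaussianReal α)).integrableOn
    (s := Set.Iic c)
  rw [← integral_Iic_eq_integral_Iio, integral_Iic_of_hasDerivAt_of_tendsto
    (hasDerivAt_exp_mul_pdf α c).continuousAt.continuousWithinAt
    (fun z _ => hasDerivAt_exp_mul_pdf α z) hi
    (tendsto_zero_of_hasDerivAt_of_integrableOn_Iic (fun z _ => hasDerivAt_exp_mul_pdf α z) hi hf),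
    sub_zero]

/-- Gaussian integration by parts for `sign(x + z s) e^{m|x + z s|}`, whose jump at `z = -x/s`
contributes twice the Gaussian density there. -/
lemma integral_mul_sign_exp {m s : ℝ} (hm : 0 < m) (hs : 0 < s) (x : ℝ) :
    ∫ z, z * (SignType.sign (x + z * s) : ℝ) * rexp (m * |x + z * s|) ∂(gaussianReal 0 1)
      = 2 * gaussianPDFReal 0 1 (-x / s)
        + m * s * ∫ z, rexp (m * |x + z * s|) ∂(gaussianReal 0 1) := by
  set c := -x / s with hc
  have hcs : c * s = -x := by rw [hc]; field_simp
  have hint : Integrable (fun z => z * (SignType.sign (x + z * s) : ℝ) * rexp (m * |x + z * s|))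
      (gaussianReal 0 1) := by
    refine ((integrable_exp_abs (1 + m * s)).const_mul (rexp (m * |x|))).mono'
      (Measurable.aestronglyMeasurable ?_) (ae_of_all _ fun z => ?_)
    · exact (measurable_id.mul (measurable_sign_cast.comp
        (by fun_prop : Measurable fun z : ℝ => x + z * s))).mul (by fun_prop)
    · rw [norm_mul, norm_mul, Real.norm_eq_abs, Real.norm_eq_abs, Real.norm_eq_abs, Real.abs_exp]
      have h1 : |z| ≤ rexp |z| := by linarith [Real.add_one_le_exp |z|]
      have h2 := exp_shift_le hm.le (le_refl |x|) (abs_of_pos hs).le z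
      have h3 := abs_sign_cast_le (x + z * s)
      calc _ ≤ rexp |z| * 1 * (rexp (m * |x|) * rexp (m * s * |z|)) := by gcongr
        _ = rexp (m * |x|) * (rexp |z| * rexp (m * s * |z|)) := by ring
        _ = _ := by rw [← Real.exp_add]; ring_nf
  have hexp := integrable_exp_shift hm.le x s
  have key : ∫ z, (z * (SignType.sign (x + z * s) : ℝ) * rexp (m * |x + z * s|)
      - m * s * rexp (m * |x + z * s|)) ∂(gaussianReal 0 1) = 2 * gaussianPDFReal 0 1 c := by
    have hI := integrable_pdf_mul (hint.sub (hexp.const_mul (m * s)))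
    rw [integral_gaussianReal_eq_integral_smul one_ne_zero]
    simp only [smul_eq_mul]
    simp only [Pi.sub_apply] at hI
    rw [← intervalIntegral.integral_Iic_add_Ioi (b := c) hI.integrableOn hI.integrableOn,
      integral_Iic_eq_integral_Iio]
    have e1 : ∫ z in Set.Iio c, gaussianPDFReal 0 1 z *
        (z * (SignType.sign (x + z * s) : ℝ) * rexp (m * |x + z * s|)
          - m * s * rexp (m * |x + z * s|)) = gaussianPDFReal 0 1 c := by
      calc _ = ∫ z in Set.Iio c, rexp (-m * x) * (gaussianPDFReal 0 1 z *
              ((-m * s - z) * rexp (-m * s * z))) := by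
            refine setIntegral_congr_fun measurableSet_Iio fun z hz => ?_
            have hneg : x + z * s < 0 := by
              have := mul_lt_mul_of_pos_right (Set.mem_Iio.1 hz) hs
              linarith
            have he : rexp (m * -(x + z * s)) = rexp (-m * x) * rexp (-m * s * z) := by
              rw [← Real.exp_add]; ring_nf
            simp only [sign_neg hneg, abs_of_neg hneg, he, SignType.coe_neg_one]
            ring
        _ = _ := by
            rw [integral_const_mul, integral_Iio_mul_exp, mul_left_comm, ← Real.exp_add,
              show -m * x + -m * s * c = -m * (x + c * s) by ring, hcs]
            simp
    have e2 : ∫ z in Set.Ioi c, gaussianPDFReal 0 1 z *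
        (z * (SignType.sign (x + z * s) : ℝ) * rexp (m * |x + z * s|)
          - m * s * rexp (m * |x + z * s|)) = gaussianPDFReal 0 1 c := by
      calc _ = ∫ z in Set.Ioi c, -rexp (m * x) * (gaussianPDFReal 0 1 z *
              ((m * s - z) * rexp (m * s * z))) := by
            refine setIntegral_congr_fun measurableSet_Ioi fun z hz => ?_
            have hpos : 0 < x + z * s := by
              have := mul_lt_mul_of_pos_right (Set.mem_Ioi.1 hz) hs
              linarith
            have he : rexp (m * (x + z * s)) = rexp (m * x) * rexp (m * s * z) := by
              rw [← Real.exp_add]; ring_nf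
            simp only [sign_pos hpos, abs_of_pos hpos, he, SignType.coe_one]
            ring
        _ = _ := by
            rw [integral_const_mul, integral_Ioi_mul_exp, neg_mul_neg, mul_left_comm,
              ← Real.exp_add, show m * x + m * s * c = m * (x + c * s) by ring, hcs]
            simp
    rw [e1, e2]
    ring
  rw [integral_sub hint (hexp.const_mul _), integral_const_mul] at key
  linarith

/-! ### The limit of `D(t,x)` -/

/-- `D(t,x) → √(b-a)(Δ(x) + m)` as `t → b⁻`, for odd `k`. -/
theorem D_limit (a b m m' : ℝ) (ha : 0 ≤ a) (hab : a < b)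
    (hm : 0 < m) (hmm' : m < m') :
    ∀ k : ℕ, Odd k → ∀ x : ℝ,
      Filter.Tendsto
        (fun t => ∫ z, z * (deriv (A b m' t) (x + z * Real.sqrt (t - a))) ^ k
            * V a b m m' t x (x + z * Real.sqrt (t - a)) ∂(gaussianReal 0 1))
        (nhdsWithin b (Set.Iio b)) (nhds (Real.sqrt (b - a) * (Del a b m x + m))) := by
  intro k hk x
  have hm' : 0 < m' := hm.trans hmm'
  have hba : 0 < b - a := by linarith
  have hs : 0 < √(b - a) := Real.sqrt_pos.2 hba
  have hN := tendsto_integral_tilt hab hm hm' x (q := fun z => z) measurable_id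
    (fun z => by linarith [Real.add_one_le_exp |z|]) k
  have hZ := tendsto_integral_tilt hab hm hm' x (q := fun _ => 1) measurable_const
    (fun z => by simp) 0
  simp only [pow_zero, one_mul] at hZ
  have hZpos := integral_exp_shift_pos hm.le x √(b - a)
  have hsign : ∀ z : ℝ, (SignType.sign (x + z * √(b - a)) : ℝ) ^ k
      = (SignType.sign (x + z * √(b - a)) : ℝ) := by
    intro z
    rcases SignType.sign (x + z * √(b - a)) with _ | _ | _
    · simp [hk.pos.ne']
    · simp [hk.neg_one_pow]
    · simp
  simp only [hsign] at hN
  rw [integral_mul_sign_exp hm hs] at hN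
  have hlim := hN.div hZ hZpos.ne'
  have hval : (2 * gaussianPDFReal 0 1 (-x / √(b - a))
        + m * √(b - a) * ∫ z, rexp (m * |x + z * √(b - a)|) ∂(gaussianReal 0 1))
      / (∫ z, rexp (m * |x + z * √(b - a)|) ∂(gaussianReal 0 1))
      = √(b - a) * (Del a b m x + m) := by
    have h1 : -(-x / √(b - a) - 0) ^ 2 / (2 * ((1 : NNReal) : ℝ)) = -x ^ 2 / (2 * (b - a)) := by
      rw [sub_zero, div_pow, Real.sq_sqrt hba.le]
      simp only [NNReal.coe_one]
      field_simp
    unfold Del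
    rw [gaussianPDFReal, h1, Real.sqrt_mul (by positivity) (b - a)]
    simp only [NNReal.coe_one, mul_one]
    have h2 : √(2 * π) ≠ 0 := (Real.sqrt_pos.2 (by positivity)).ne'
    have h3 := hZpos.ne'
    generalize ∫ z, rexp (m * |x + z * √(b - a)|) ∂(gaussianReal 0 1) = Z at h3
    field_simp
  rw [hval] at hlim
  refine hlim.congr' ?_
  -- Once the normalisation `∫ exp (m A)` is positive, it equals `exp (m B)`.
  filter_upwards [hZ.eventually_const_lt hZpos] with t ht
  have hB : rexp (m * B a b m m' t x)
      = ∫ z, rexp (m * A b m' t (x + z * √(t - a))) ∂(gaussianReal 0 1) := by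
    unfold B
    rw [← mul_assoc, mul_one_div_cancel hm.ne', one_mul, Real.exp_log ht]
  simp only [V, mul_sub, Real.exp_sub, hB, Pi.div_apply]
  rw [← integral_div]
  refine integral_congr_ae (ae_of_all _ fun z => ?_)
  simp only
  ring
end
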